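/- arXiv:1606.03617 — 2 statements merged into one kernel-verified Lean document; each statement's English description precedes it below -/
import Mathlib

section
/- Let R be an integral domain of characteristic zero containing an element i with i² = −1. Then the set { Y(1) : Y ∈ R[t, t⁻¹] and there exists X ∈ R[t, t⁻¹] with X² − (t² − 1)·Y² = 1 }, where Y(1) denotes evaluation of the Laurent polynomial Y at t = 1, is exactly the set ℤ + iℤ = { a·1_R + b·i : a, b ∈ ℤ } of Gaussian integers in R. -/
/-- Evaluation of a Laurent polynomial at `t = 1`: the ring homomorphism
`R[t,t⁻¹] → R` sending every power of `t` to `1`. -/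
noncomputable def LaurentPolynomial.evalAtOne (R : Type*) [CommRing R] :
    LaurentPolynomial R →+* R :=
  AddMonoidAlgebra.liftNCRingHom (RingHom.id R) (1 : Multiplicative ℤ →* R)
    (fun _ _ => Commute.all _ _)

/-!
The solutions of `X² - (t² - 1) Y² = 1` form a group under multiplication of `X + Y √(t² - 1)`.
Since `t² - 1` vanishes at `1`, the map `(X, Y) ↦ Y(1)` is additive on the solutions with
`X(1) = 1`, so the values form a group; it contains `1` and `i` because of the solutions `(t, 1)`
and `(t⁻¹, i t⁻¹)`. Conversely, multiplying by `(t⁻¹, ± i t⁻¹)` lowers the order of the pole at `0`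
until the solution is polynomial. Multiplying a polynomial solution by `(t, ± 1)` lowers its degree,
so it is a pair of Chebyshev polynomials up to sign, and its value at `1` is an integer.
-/

section PellValues

variable {A B : Type*} [CommRing A] [CommRing B]

/-- The group of values `f y` at solutions of Pell's equation `x² - d y² = 1` in `A`, where `f`
is a ring homomorphism killing `d`. The solutions are normalised by `f x = 1`, which makes
`(x, y) ↦ f y` additive for the group law on solutions; over a domain this does not change the
set of values (see `mem_pellValues_iff`). -/
def pellValues (f : A →+* B) {d : A} (hd : f d = 0) : AddSubgroup B where
  carrier := {r | ∃ x y, x ^ 2 - d * y ^ 2 = 1 ∧ f x = 1 ∧ f y = r}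
  zero_mem' := ⟨1, 0, by ring, map_one f, map_zero f⟩
  add_mem' := by
    rintro _ _ ⟨x, y, h, hx, rfl⟩ ⟨u, v, h', hu, rfl⟩
    refine ⟨x * u + d * y * v, x * v + y * u, ?_, ?_, ?_⟩
    · linear_combination (u ^ 2 - d * v ^ 2) * h + h'
    · simp [hd, hx, hu]
    · simp [hx, hu, add_comm]
  neg_mem' := by
    rintro _ ⟨x, y, h, hx, rfl⟩
    exact ⟨x, -y, by rwa [neg_sq], hx, map_neg f y⟩

lemma mem_pellValues_iff [NoZeroDivisors B] {f : A →+* B} {d : A} {hd : f d = 0} {r : B} :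
    r ∈ pellValues f hd ↔ ∃ x y, x ^ 2 - d * y ^ 2 = 1 ∧ f y = r := by
  refine ⟨fun ⟨x, y, h, _, hy⟩ ↦ ⟨x, y, h, hy⟩, fun ⟨x, y, h, hy⟩ ↦ ?_⟩
  have hx : f x ^ 2 = 1 := by simpa [hd] using congrArg f h
  rcases sq_eq_one_iff.mp hx with hx | hx
  · exact ⟨x, y, h, hx, hy⟩
  · exact ⟨-x, y, by rwa [neg_sq], by rw [map_neg, hx, neg_neg], hy⟩

end PellValues

lemma sq_dvd_sub_or_sq_dvd_add_or_dvd_and_dvd {A : Type*} [CommRing A] [IsDomain A]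
    {p a b i : A} (hp : Prime p) (h2 : ¬ p ∣ 2) (hi : i ^ 2 = -1) (h : p ^ 2 ∣ a ^ 2 + b ^ 2) :
    p ^ 2 ∣ a - i * b ∨ p ^ 2 ∣ a + i * b ∨ p ∣ a ∧ p ∣ b := by
  have hprod : p ^ 2 ∣ (a - i * b) * (a + i * b) := by
    rwa [show (a - i * b) * (a + i * b) = a ^ 2 + b ^ 2 by linear_combination -b ^ 2 * hi]
  by_cases hsub : p ∣ a - i * b
  · by_cases hadd : p ∣ a + i * b
    · have ha : p ∣ 2 * a := by convert dvd_add hsub hadd using 1; ring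
      have hb : p ∣ 2 * b := by
        convert (dvd_sub hsub hadd).mul_left i using 1
        linear_combination 2 * b * hi
      exact .inr (.inr ⟨(hp.dvd_mul.mp ha).resolve_left h2, (hp.dvd_mul.mp hb).resolve_left h2⟩)
    · exact .inl (hp.pow_dvd_of_dvd_mul_right 2 hadd hprod)
  · exact .inr (.inl (hp.pow_dvd_of_dvd_mul_left 2 hsub hprod))

section Polynomial

open Polynomial
open Polynomial.Chebyshev (T U)

variable {R : Type*} [CommRing R]

lemma degree_sub_lt_or_degree_add_lt_of_pell [IsDomain R] (h2 : (2 : R) ≠ 0) {P Q : R[X]}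
    (hQ : Q ≠ 0) (h : P ^ 2 - (X ^ 2 - 1) * Q ^ 2 = 1) :
    (P - X * Q).degree < Q.degree ∨ (P + X * Q).degree < Q.degree := by
  by_contra! hdeg
  obtain ⟨hsub, hadd⟩ := hdeg
  have hsub0 : P - X * Q ≠ 0 := by
    intro h0
    simp [h0, hQ] at hsub
  have hadd0 : P + X * Q ≠ 0 := by
    intro h0
    simp [h0, hQ] at hadd
  have hprod : (P - X * Q).natDegree + (P + X * Q).natDegree ≤ 2 * Q.natDegree := by
    rw [← natDegree_mul hsub0 hadd0,
      show (P - X * Q) * (P + X * Q) = 1 - Q ^ 2 by linear_combination h]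
    exact (natDegree_sub_le _ _).trans (by simp)
  have hdiff : Q.natDegree + 1 ≤ max (P + X * Q).natDegree (P - X * Q).natDegree := by
    rw [← natDegree_X_mul hQ, ← natDegree_C_mul h2,
      show C 2 * (X * Q) = (P + X * Q) - (P - X * Q) by rw [C_ofNat]; ring]
    exact natDegree_sub_le _ _
  have := natDegree_le_natDegree hsub
  have := natDegree_le_natDegree hadd
  omega

/-- The pairs `± (T n, U (n - 1))` of Chebyshev polynomials for `n : ℤ`, which are the polynomial
solutions of Pell's equation `P² - (X² - 1) Q² = 1`. Because `T (-n) = T n` and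
`U (-n - 1) = - U (n - 1)`, it is enough to let the sign of `P` vary. -/
def IsChebyshevPair (P Q : R[X]) : Prop :=
  ∃ n : ℤ, Q = U R (n - 1) ∧ (P = T R n ∨ P = -T R n)

namespace IsChebyshevPair

lemma neg_left {P Q : R[X]} (h : IsChebyshevPair P Q) : IsChebyshevPair (-P) Q := by
  obtain ⟨n, hQ, rfl | rfl⟩ := h
  · exact ⟨n, hQ, .inr rfl⟩
  · exact ⟨n, hQ, .inl (neg_neg _)⟩

lemma mul_X_one {P Q : R[X]} (h : IsChebyshevPair P Q) :
    IsChebyshevPair (X * P + (X ^ 2 - 1) * Q) (X * Q + P) := by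
  obtain ⟨n, rfl, hP⟩ := h
  have hU : U R n = X * U R (n - 1) + T R n := by
    simpa using Chebyshev.U_eq_X_mul_U_add_T R (n - 1)
  have hT : T R (n + 1) = X * T R n + (X ^ 2 - 1) * U R (n - 1) := by
    have := Chebyshev.T_eq_X_mul_T_sub_pol_U R (n - 1)
    rw [show n - 1 + 2 = n + 1 by ring, sub_add_cancel] at this
    linear_combination this
  rcases hP with rfl | rfl
  · exact ⟨n + 1, by rw [add_sub_cancel_right, hU], .inl hT.symm⟩
  · have hU' : U R (n - 1 - 1) = 2 * X * U R (n - 1) - U R n := by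
      rw [Chebyshev.U_sub_one, sub_add_cancel]
    refine ⟨n - 1, ?_, .inr ?_⟩
    · linear_combination hU - hU'
    · linear_combination Chebyshev.T_sub_one R n - hT

end IsChebyshevPair

theorem isChebyshevPair_of_pell [IsDomain R] (h2 : (2 : R) ≠ 0) {P Q : R[X]}
    (h : P ^ 2 - (X ^ 2 - 1) * Q ^ 2 = 1) : IsChebyshevPair P Q := by
  induction hq : Q.degree using WellFoundedLT.induction generalizing P Q with
  | ind q ih =>
    subst hq
    by_cases hQ : Q = 0
    · exact ⟨0, by simp [hQ], by simpa [hQ] using h⟩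
    wlog hdeg : (P - X * Q).degree < Q.degree generalizing P
    · have hadd := (degree_sub_lt_or_degree_add_lt_of_pell h2 hQ h).resolve_left hdeg
      have hneg := this (P := -P) (by rwa [neg_sq]) (by rwa [← neg_add', degree_neg])
      simpa using hneg.neg_left
    have hdiv : IsChebyshevPair (X * P - (X ^ 2 - 1) * Q) (X * Q - P) :=
      ih _ (by rwa [← degree_neg, neg_sub]) (by linear_combination h) rfl
    convert hdiv.mul_X_one using 1 <;> ring

lemma exists_pell_of_X_sq_dvd {N : ℕ} {P Q : R[X]} {e : R} (he : e ^ 2 = -1)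
    (h : P ^ 2 - (X ^ 2 - 1) * Q ^ 2 = (X ^ (N + 1)) ^ 2) (hdvd : X ^ 2 ∣ P - C e * Q) :
    ∃ P' Q' : R[X], P' ^ 2 - (X ^ 2 - 1) * Q' ^ 2 = (X ^ N) ^ 2 ∧
      Q.eval 1 = Q'.eval 1 - e * P'.eval 1 := by
  obtain ⟨G, hG⟩ := hdvd
  obtain rfl : P = X ^ 2 * G + C e * Q := by linear_combination hG
  have he_C : (C e : R[X]) ^ 2 = -1 := by rw [← C_pow, he, C_neg, C_1]
  -- With `s = √(X² - 1)`, this is `(P + Q s) (1 + e s) / X²`.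
  refine ⟨G + C e * Q, C e * G, ?_, ?_⟩
  · apply (monic_X_pow 2).isRegular.left
    dsimp only
    linear_combination h + (X ^ 2 * Q ^ 2 - X ^ 2 * (X ^ 2 - 1) * G ^ 2 - Q ^ 2) * he_C
  · simp only [eval_mul, eval_add, eval_C]
    linear_combination Q.eval 1 * he

theorem eval_one_mem_closure_of_pell [IsDomain R] (h2 : (2 : R) ≠ 0) {i : R} (hi : i ^ 2 = -1)
    {N : ℕ} {P Q : R[X]} (h : P ^ 2 - (X ^ 2 - 1) * Q ^ 2 = (X ^ N) ^ 2) :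
    Q.eval 1 ∈ AddSubgroup.closure {1, i} := by
  have h_one : (1 : R) ∈ AddSubgroup.closure {1, i} := AddSubgroup.subset_closure (by simp)
  have h_i : i ∈ AddSubgroup.closure {1, i} := AddSubgroup.subset_closure (by simp)
  induction N generalizing P Q with
  | zero =>
    obtain ⟨n, rfl, -⟩ := isChebyshevPair_of_pell h2 (h.trans (by simp))
    simpa using zsmul_mem h_one n
  | succ N ih =>
    have descend {e : R} (he : e ^ 2 = -1) (he_mem : e ∈ AddSubgroup.closure {1, i})
        (hdvd : X ^ 2 ∣ P - C e * Q) : Q.eval 1 ∈ AddSubgroup.closure {1, i} := by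
      obtain ⟨P', Q', h', hQ⟩ := exists_pell_of_X_sq_dvd he h hdvd
      have hP' : P'.eval 1 = 1 ∨ P'.eval 1 = -1 :=
        by simpa using congrArg (eval 1) h'
      rw [hQ]
      refine sub_mem (ih h') ?_
      rcases hP' with hP' | hP' <;> simpa [hP'] using he_mem
    have hi_C : (C i : R[X]) ^ 2 = -1 := by rw [← C_pow, hi, C_neg, C_1]
    have hX2 : ¬ (X : R[X]) ∣ 2 := by simpa [X_dvd_iff] using h2
    have hdvd : X ^ 2 ∣ P ^ 2 + Q ^ 2 := ⟨(X ^ N) ^ 2 + Q ^ 2, by linear_combination h⟩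
    rcases sq_dvd_sub_or_sq_dvd_add_or_dvd_and_dvd prime_X hX2 hi_C hdvd with
      hsub | hadd | ⟨⟨P', rfl⟩, ⟨Q', rfl⟩⟩
    · exact descend hi h_i hsub
    · exact descend (e := -i) (by rwa [neg_sq]) (neg_mem h_i)
        (by rwa [C_neg, neg_mul, sub_neg_eq_add])
    · have h' : P' ^ 2 - (X ^ 2 - 1) * Q' ^ 2 = (X ^ N) ^ 2 := by
        apply (monic_X_pow 2).isRegular.left
        dsimp only
        linear_combination h
      simpa using ih h'

end Polynomial

section Laurent

open LaurentPolynomial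

variable {R : Type*} [CommRing R]

@[simp]
lemma evalAtOne_T (n : ℤ) : evalAtOne R (T n) = 1 :=
  (AddMonoidAlgebra.liftNC_single _ _ _ _).trans (by simp)

@[simp]
lemma evalAtOne_C (r : R) : evalAtOne R (C r) = r :=
  (AddMonoidAlgebra.liftNC_single _ _ _ _).trans (by simp)

@[simp]
lemma evalAtOne_toLaurent (p : Polynomial R) : evalAtOne R p.toLaurent = p.eval 1 := by
  have : (evalAtOne R).comp Polynomial.toLaurent = Polynomial.evalRingHom 1 := by
    ext <;> simp
  exact DFunLike.congr_fun this p

lemma evalAtOne_T_one_sq_sub_one : evalAtOne R (T 1 ^ 2 - 1) = 0 := by simp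

lemma closure_one_I_le_pellValues {i : R} (hi : i ^ 2 = -1) :
    AddSubgroup.closure {1, i} ≤ pellValues (evalAtOne R) evalAtOne_T_one_sq_sub_one := by
  rw [AddSubgroup.closure_le, Set.pair_subset_iff]
  have hT : (T 1 * T (-1) : R[T;T⁻¹]) = 1 := by rw [← T_add, add_neg_cancel, T_zero]
  have hC : (C i : R[T;T⁻¹]) ^ 2 = -1 := by rw [← map_pow, hi, map_neg, map_one]
  refine ⟨⟨T 1, 1, by ring, by simp, by simp⟩, ⟨T (-1), C i * T (-1), ?_, by simp, by simp⟩⟩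
  linear_combination (1 - T 1 ^ 2) * T (-1) ^ 2 * hC + (T 1 * T (-1) + 1) * hT

lemma exists_polynomial_pell {x y : R[T;T⁻¹]} (h : x ^ 2 - (T 1 ^ 2 - 1) * y ^ 2 = 1) :
    ∃ (N : ℕ) (P Q : Polynomial R),
      P ^ 2 - (Polynomial.X ^ 2 - 1) * Q ^ 2 = (Polynomial.X ^ N) ^ 2 ∧
      Q.eval 1 = evalAtOne R y := by
  obtain ⟨m, P, hP⟩ := x.exists_T_pow
  obtain ⟨n, Q, hQ⟩ := y.exists_T_pow
  refine ⟨m + n, P * Polynomial.X ^ n, Q * Polynomial.X ^ m, ?_, ?_⟩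
  · apply Polynomial.toLaurent_injective
    simp only [map_sub, map_mul, map_pow, map_one, hP, hQ, Polynomial.toLaurent_X, pow_add]
    have hT (k : ℕ) : (T k : R[T;T⁻¹]) = T 1 ^ k := by rw [T_pow, mul_one]
    rw [hT, hT]
    linear_combination (T 1 ^ m * T 1 ^ n) ^ 2 * h
  · simp [← evalAtOne_toLaurent, hQ]

theorem pellValues_eq_closure [IsDomain R] (h2 : (2 : R) ≠ 0) {i : R} (hi : i ^ 2 = -1) :
    pellValues (evalAtOne R) evalAtOne_T_one_sq_sub_one = AddSubgroup.closure {1, i} := by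
  refine le_antisymm ?_ (closure_one_I_le_pellValues hi)
  rintro _ ⟨x, y, h, -, rfl⟩
  obtain ⟨N, P, Q, hPQ, hy⟩ := exists_polynomial_pell h
  exact hy ▸ eval_one_mem_closure_of_pell h2 hi hPQ

end Laurent

theorem pell_values_at_one_laurent_ring_gaussian_general (R : Type*) [CommRing R] [IsDomain R]
    (h2 : (2 : R) ≠ 0) (i : R) (hi : i ^ 2 = -1) :
    { r : R | ∃ Y X : LaurentPolynomial R,
        X ^ 2 - (LaurentPolynomial.T 1 ^ 2 - 1) * Y ^ 2 = 1 ∧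
        LaurentPolynomial.evalAtOne R Y = r } =
      { r : R | ∃ a b : ℤ, r = (a : R) + (b : R) * i } := by
  ext r
  rw [Set.mem_ofPred_eq, exists_comm, ← mem_pellValues_iff (hd := evalAtOne_T_one_sq_sub_one),
    pellValues_eq_closure h2 hi, AddSubgroup.mem_closure_pair]
  simp [eq_comm]

/-- Let `R` be an integral domain of characteristic zero containing an element
`i` with `i² = −1`. The set of values `Y(1)` of Laurent polynomials
`Y ∈ R[t,t⁻¹]` for which there exists `X ∈ R[t,t⁻¹]` with `X² − (t² − 1)·Y² = 1`
is exactly the set `ℤ + iℤ` of Gaussian integers in `R`. -/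
theorem pell_values_at_one_laurent_ring_gaussian (R : Type*) [CommRing R] [IsDomain R]
    [CharZero R] (i : R) (hi : i ^ 2 = -1) :
    { r : R | ∃ Y X : LaurentPolynomial R,
        X ^ 2 - (LaurentPolynomial.T 1 ^ 2 - 1) * Y ^ 2 = 1 ∧
        LaurentPolynomial.evalAtOne R Y = r } =
      { r : R | ∃ a b : ℤ, r = (a : R) + (b : R) * i } :=
  pell_values_at_one_laurent_ring_gaussian_general R two_ne_zero i hi
end

section
/- Let K be a field and G a group, and suppose the group algebra K(G) has only trivial units, i.e. every invertible element of K(G) is of the form α·g with α ∈ K ∖ {0} and g ∈ G. Then for every x ∈ K(G), the element x lies in the image of K (the scalar multiples of 1) if and only if x = 0, or x = −1, or there exists y ∈ K(G) with x·(x + 1)·y = 1. In particular, K is a Diophantine subset of K(G). -/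
/-!
If `x * (x + 1) * y = 1` and one-sided inverses are two-sided, then `x` and `x + 1` are units, so
`x = α g` and `α g + 1 = β h`. A sum of nonzero multiples of two distinct group elements is not a
multiple of a single one, so `g = 1` and `x` is a scalar.

One-sided inverses are two-sided because there are too few nilpotents. By the augmentation, a
nilpotent `n` has `1 + n = g` for some `g`, and if `n = g - 1`, `m = h - 1` and `n + m = k - 1` then
`g + h = 1 + k`, which forces `n = 0`, `m = 0` or `n = m`. On the other hand, `a * b = 1` with
`e = 1 - b * a ≠ 0` would make `e * a` and `e * a ^ 2` distinct, nonzero and square-zero, with a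
square-zero sum, since `a * e = 0`.
-/

open MonoidAlgebra

theorem isDedekindFiniteMonoid_of_sq_zero_add {R : Type*} [Ring R]
    (hR : ∀ n m : R, n ^ 2 = 0 → m ^ 2 = 0 → (n + m) ^ 2 = 0 → n = 0 ∨ m = 0 ∨ n = m) :
    IsDedekindFiniteMonoid R where
  mul_eq_one_symm {a b} hab := by
    set e := 1 - b * a with he
    have hae : a * e = 0 := by
      rw [he, mul_sub, mul_one, ← mul_assoc, hab, one_mul, sub_self]
    have hee : e * e = e := by
      rw [he, sub_mul, one_mul, ← he, mul_assoc, hae, mul_zero, sub_zero]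
    have sq_zero (s : R) : (e * (s * a)) ^ 2 = 0 := by
      calc (e * (s * a)) ^ 2 = e * s * (a * e) * (s * a) := by noncomm_ring
        _ = 0 := by rw [hae, mul_zero, zero_mul]
    have cancel_right {s t : R} (h : s * a = t * a) : s = t := by
      simpa only [mul_assoc, hab, mul_one] using congrArg (· * b) h
    have sum_sq_zero : (e * a + e * a * a) ^ 2 = 0 := by
      simpa only [add_mul, mul_add, one_mul, mul_assoc] using sq_zero (1 + a)
    suffices e = 0 from (sub_eq_zero.mp this).symm
    obtain h | h | h := hR (e * a) (e * a * a) (by simpa only [one_mul] using sq_zero 1)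
      (by simpa only [mul_assoc] using sq_zero a) sum_sq_zero
    · exact cancel_right (h.trans (zero_mul a).symm)
    · exact cancel_right (cancel_right (by rw [h, zero_mul, zero_mul]))
    · have hea : e = e * a := cancel_right h
      calc e = e * a * e := by rw [← hea, hee]
        _ = 0 := by rw [mul_assoc, hae, mul_zero]

/-- The augmentation `∑ αᵢ gᵢ ↦ ∑ αᵢ` of a monoid algebra, as a ring homomorphism because the
coefficients need not commute. -/
noncomputable def augmentation (k G : Type*) [Semiring k] [Monoid G] : MonoidAlgebra k G →+* k :=
  liftNCRingHom (RingHom.id k) 1 fun x _ ↦ Commute.one_right x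

@[simp]
theorem augmentation_single {k G : Type*} [Semiring k] [Monoid G] (g : G) (α : k) :
    augmentation k G (single g α) = α := by
  simp [augmentation]

theorem eq_of_single_add_single_eq_single {k G : Type*} [Semiring k] {g h l : G} {α β γ : k}
    (hα : α ≠ 0) (hβ : β ≠ 0)
    (hsum : single g α + single h β = (single l γ : MonoidAlgebra k G)) : g = h := by
  have hγ : α + β = γ := by simpa using congrArg (liftNC (.id k) 1) hsum
  rw [← hγ, single_add, single_add_single_inj hα hβ] at hsum
  grind

/-- The monoid algebra `k[G]` has only trivial units: each unit is a nonzero multiple of an element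
of `G`. -/
def HasTrivialUnits (k G : Type*) [Semiring k] [Monoid G] : Prop :=
  ∀ x : MonoidAlgebra k G, IsUnit x → ∃ (α : k) (g : G), α ≠ 0 ∧ x = single g α

namespace HasTrivialUnits

protected theorem nontrivial {k G : Type*} [Semiring k] [Monoid G] (htu : HasTrivialUnits k G) :
    Nontrivial k :=
  have ⟨α, _, hα, _⟩ := htu 1 isUnit_one
  ⟨α, 0, hα⟩

theorem mem_range_singleOneRingHom_of_isUnit {k G : Type*} [Semiring k] [Monoid G]
    (htu : HasTrivialUnits k G) {x : MonoidAlgebra k G} (hx : IsUnit x) (hx' : IsUnit (x + 1)) :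
    x ∈ Set.range (singleOneRingHom : k →+* MonoidAlgebra k G) := by
  have := htu.nontrivial
  obtain ⟨α, g, hα, rfl⟩ := htu x hx
  obtain ⟨β, h, -, hβ⟩ := htu _ hx'
  obtain rfl : g = 1 := eq_of_single_add_single_eq_single hα one_ne_zero hβ
  exact ⟨α, rfl⟩

variable {k G : Type*} [Ring k] [IsReduced k] [Monoid G]

theorem exists_one_add_eq_single_of_isNilpotent (htu : HasTrivialUnits k G)
    {n : MonoidAlgebra k G} (hn : IsNilpotent n) : ∃ g : G, 1 + n = single g 1 := by
  obtain ⟨α, g, -, hg⟩ := htu (1 + n) hn.isUnit_one_add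
  have hα : 1 = α := by
    simpa [(hn.map (augmentation k G)).eq_zero] using congrArg (augmentation k G) hg
  exact ⟨g, hα ▸ hg⟩

theorem eq_zero_or_eq_zero_or_eq_of_isNilpotent_add (htu : HasTrivialUnits k G)
    {n m : MonoidAlgebra k G} (hn : IsNilpotent n) (hm : IsNilpotent m)
    (hnm : IsNilpotent (n + m)) : n = 0 ∨ m = 0 ∨ n = m := by
  have := htu.nontrivial
  obtain ⟨g, hg⟩ := htu.exists_one_add_eq_single_of_isNilpotent hn
  obtain ⟨h, hh⟩ := htu.exists_one_add_eq_single_of_isNilpotent hm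
  obtain ⟨l, hl⟩ := htu.exists_one_add_eq_single_of_isNilpotent hnm
  have hsum : single g (1 : k) + single h 1 = single 1 1 + single l 1 := by
    rw [← hg, ← hh, ← hl, ← one_def]
    abel
  rw [single_add_single_inj one_ne_zero one_ne_zero] at hsum
  obtain ⟨rfl, -⟩ | ⟨-, -, rfl⟩ | ⟨-, rfl, -⟩ := hsum
  · exact .inl (add_eq_left.mp hg)
  · exact .inr (.inl (add_eq_left.mp hh))
  · exact .inr (.inr (add_left_cancel (hg.trans hh.symm)))

theorem isDedekindFiniteMonoid (htu : HasTrivialUnits k G) :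
    IsDedekindFiniteMonoid (MonoidAlgebra k G) :=
  isDedekindFiniteMonoid_of_sq_zero_add fun _ _ hn hm hnm ↦
    htu.eq_zero_or_eq_zero_or_eq_of_isNilpotent_add ⟨2, hn⟩ ⟨2, hm⟩ ⟨2, hnm⟩

theorem mem_range_singleOneRingHom_of_mul_eq_one (htu : HasTrivialUnits k G)
    {x y : MonoidAlgebra k G} (hxy : x * (x + 1) * y = 1) :
    x ∈ Set.range (singleOneRingHom : k →+* MonoidAlgebra k G) := by
  have := htu.isDedekindFiniteMonoid
  have hcomm : Commute x (x + 1) := (Commute.refl x).add_right (.one_right x)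
  obtain ⟨hx, hx'⟩ := hcomm.isUnit_mul_iff.mp (.of_mul_eq_one y hxy)
  exact htu.mem_range_singleOneRingHom_of_isUnit hx hx'

end HasTrivialUnits

theorem eq_zero_or_eq_neg_one_or_exists_mul_eq_one {K : Type*} [DivisionRing K] (c : K) :
    c = 0 ∨ c = -1 ∨ ∃ d, c * (c + 1) * d = 1 := by
  by_cases h0 : c = 0
  · exact .inl h0
  by_cases h1 : c = -1
  · exact .inr (.inl h1)
  have hc : c + 1 ≠ 0 := mt eq_neg_of_add_eq_zero_left h1
  exact .inr (.inr ⟨_, mul_inv_cancel₀ (mul_ne_zero h0 hc)⟩)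

theorem scalars_diophantine_in_group_algebra_general {K G : Type*} [DivisionRing K] [Monoid G]
    (htu : HasTrivialUnits K G) (x : MonoidAlgebra K G) :
    x ∈ Set.range (singleOneRingHom : K →+* MonoidAlgebra K G) ↔
      x = 0 ∨ x = -1 ∨ ∃ y : MonoidAlgebra K G, x * (x + 1) * y = 1 := by
  constructor
  · rintro ⟨c, rfl⟩
    obtain rfl | rfl | ⟨d, hd⟩ := eq_zero_or_eq_neg_one_or_exists_mul_eq_one c
    · exact .inl (map_zero _)
    · exact .inr (.inl (by rw [map_neg, map_one]))
    · refine .inr (.inr ⟨singleOneRingHom d, ?_⟩)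
      simpa only [map_mul, map_add, map_one] using
        congrArg (singleOneRingHom : K →+* MonoidAlgebra K G) hd
  · rintro (rfl | rfl | ⟨y, hy⟩)
    · exact ⟨0, map_zero _⟩
    · exact ⟨-1, by rw [map_neg, map_one]⟩
    · exact htu.mem_range_singleOneRingHom_of_mul_eq_one hy

/-- Let `K` be a field and `G` a group such that the group algebra `K(G)` has
only trivial units. Then `x ∈ K(G)` is a scalar iff `x = 0`, or `x = −1`, or
`x·(x+1)·y = 1` for some `y`; in particular `K` is Diophantine in `K(G)`. -/
theorem scalars_diophantine_in_group_algebra (K G : Type*) [Field K] [Group G]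
    (htu : ∀ x : MonoidAlgebra K G, IsUnit x →
      ∃ (α : K) (g : G), α ≠ 0 ∧ x = MonoidAlgebra.single g α)
    (x : MonoidAlgebra K G) :
    x ∈ Set.range (algebraMap K (MonoidAlgebra K G)) ↔
      x = 0 ∨ x = -1 ∨ ∃ y : MonoidAlgebra K G, x * (x + 1) * y = 1 :=
  scalars_diophantine_in_group_algebra_general htu x
end
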